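/- Let q be a prime power and let P be a closed point of degree 3 of P² over F_q not contained in any F_q-rational line, given by a point p ∈ P²(F_{q³}) whose Frobenius orbit {p, φ(p), φ²(p)} has exactly 3 elements, these three points being non-collinear. Let V be the F_q-vector space of homogeneous polynomials of degree 3 in F_q[x,y,z] vanishing at p. Then the evaluation code C_L(Z, L_3), obtained by evaluating the elements of V at the q² + q + 1 points of P²(F_q), has parameters [q² + q + 1, 7, q² − q − 1]: its length is q² + q + 1, its dimension is 7 (in particular dim V = 7 and the evaluation map is injective), and its minimum distance is exactly q² − q − 1. -/

import Mathlib

open MvPolynomial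

noncomputable section

/-!
Let `v ∈ E³` represent `p`. Since the conjugates of `v` are linearly independent, the trace
coordinates `x ↦ (Tr (v j * x)) j` identify `E` with `F³`, and in these coordinates a form `f` of
degree `d` becomes a form in the conjugates `x, x ^ q, x ^ q ^ 2` whose coefficients at the pure
powers `Yᵢ ^ d` are `f (φⁱ p)`; they vanish when `f` passes through `p`. Writing
`x ^ q = x * t` and `x ^ q ^ 2 = x * t ^ (1 + q)` with `t = x ^ (q - 1)`, which depends only on the
projective point of `x` and determines it, leaves `x ^ d` times a polynomial in `t` with exponents
in `[1, (d - 1) * (q + 1) + 1]`. For `d ≤ q + 1` this polynomial is nonzero, so `f` has at most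
`(d - 1) * (q + 1)` rational zeros.

For `d = 3` the bound `2 * (q + 1)` is attained by a line together with a conic disjoint from it:
with `p = (1 : g : g ^ 2)`, the conic `y ^ 2 = x * z` passes through `p` and the line
`z = y + c * x` misses the conic over `F` once `s ^ 2 = s + c` has no solution in `F`.
-/

section Polynomial

variable {R : Type*} [CommSemiring R] {σ : Type*} {f : MvPolynomial σ R} {d : ℕ}

theorem eval_smul_of_isHomogeneous (hf : f.IsHomogeneous d) (c : R) (x : σ → R) :
    eval (c • x) f = c ^ d * eval x f := by
  rw [eval_eq, eval_eq, Finset.mul_sum]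
  refine Finset.sum_congr rfl fun m hm => ?_
  simp only [Pi.smul_apply, smul_eq_mul, mul_pow, Finset.prod_mul_distrib,
    Finset.prod_pow_eq_pow_sum, ← hf.degree_eq_sum_deg_support hm]
  ring

theorem coeff_single_of_isHomogeneous [DecidableEq σ] (hf : f.IsHomogeneous d) (i : σ) :
    coeff (Finsupp.single i d) f = eval (Pi.single i 1) f := by
  rw [eval_eq]
  symm
  have eval_single : ∏ j ∈ (Finsupp.single i d).support,
      (Pi.single i 1 : σ → R) j ^ Finsupp.single i d j = 1 := by
    refine Finset.prod_eq_one fun j hj => ?_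
    rw [Finset.mem_singleton.mp (Finsupp.support_single_subset hj), Pi.single_eq_same, one_pow]
  refine (Finset.sum_eq_single (Finsupp.single i d) (fun m hm hmi => ?_) fun hi => ?_).trans
    (by rw [eval_single, mul_one])
  · obtain ⟨j, hj, hji⟩ : ∃ j ∈ m.support, j ≠ i := by
      by_contra! hsupp
      have hm_eq := Finsupp.support_subset_singleton.mp fun j hj =>
        Finset.mem_singleton.mpr (hsupp j hj)
      have hdeg := hf.degree_eq_sum_deg_support hm
      rw [hm_eq, ← Finsupp.degree_apply, Finsupp.degree_single] at hdeg
      exact hmi (hm_eq.trans (congrArg _ hdeg.symm))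
    rw [Finset.prod_eq_zero hj, mul_zero]
    rw [Pi.single_eq_of_ne hji, zero_pow (Finsupp.mem_support_iff.mp hj)]
  · rw [notMem_support_iff.mp hi, zero_mul]

theorem apply_lt_of_mem_support_of_coeff_single_eq_zero (hf : f.IsHomogeneous d) {i : σ}
    (hi : coeff (Finsupp.single i d) f = 0) {m : σ →₀ ℕ} (hm : m ∈ f.support) : m i < d := by
  have hdeg : m.degree = d := (hf.degree_eq_sum_deg_support hm).symm
  refine lt_of_le_of_ne (hdeg ▸ Finsupp.le_degree i m) fun hmi => ?_
  have hle : Finsupp.single i d ≤ m := Finsupp.single_le_iff.mpr hmi.ge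
  obtain ⟨k, rfl⟩ := le_iff_exists_add.mp hle
  rw [map_add, Finsupp.degree_single, Nat.add_eq_left, Finsupp.degree_eq_zero_iff] at hdeg
  rw [hdeg, add_zero] at hm
  exact mem_support_iff.mp hm hi

theorem aeval_X_pow_eq_sum (N : σ → ℕ) (f : MvPolynomial σ R) :
    aeval (fun i => (Polynomial.X : Polynomial R) ^ N i) f =
      ∑ m ∈ f.support, Polynomial.monomial (Finsupp.weight N m) (coeff m f) := by
  rw [aeval_def, eval₂_eq]
  refine Finset.sum_congr rfl fun m _ => ?_
  simp only [← pow_mul, Finset.prod_pow_eq_pow_sum, Finsupp.weight_apply, Finsupp.sum,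
    smul_eq_mul, ← Polynomial.C_mul_X_pow_eq_monomial, mul_comm (N _), Polynomial.algebraMap_eq]

theorem exists_weight_eq_of_mem_support_aeval_X_pow {N : σ → ℕ} {n : ℕ}
    (hn : n ∈ (aeval (fun i => (Polynomial.X : Polynomial R) ^ N i) f).support) :
    ∃ m ∈ f.support, Finsupp.weight N m = n := by
  contrapose! hn
  rw [Polynomial.notMem_support_iff, aeval_X_pow_eq_sum, Polynomial.finsetSum_coeff]
  exact Finset.sum_eq_zero fun m hm => Polynomial.coeff_monomial_of_ne _ (hn m hm).symm

theorem aeval_X_pow_ne_zero {N : σ → ℕ}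
    (hN : Set.InjOn (Finsupp.weight N) (f.support : Set (σ →₀ ℕ))) (hf : f ≠ 0) :
    aeval (fun i => (Polynomial.X : Polynomial R) ^ N i) f ≠ 0 := by
  obtain ⟨m, hm⟩ := support_nonempty.mpr hf
  intro h
  apply mem_support_iff.mp hm
  calc coeff m f = (aeval (fun i => (Polynomial.X : Polynomial R) ^ N i) f).coeff
        (Finsupp.weight N m) := by
        rw [aeval_X_pow_eq_sum, Polynomial.finsetSum_coeff, Finset.sum_eq_single_of_mem m hm,
          Polynomial.coeff_monomial_same]
        exact fun k hk hkm => Polynomial.coeff_monomial_of_ne _ fun h => hkm (hN hk hm h.symm)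
    _ = 0 := by rw [h, Polynomial.coeff_zero]

theorem ncard_nonzero_roots_le {R : Type*} [CommRing R] [IsDomain R] {h : Polynomial R}
    (hh : h ≠ 0) {a b : ℕ} (hsupp : ∀ n ∈ h.support, a ≤ n ∧ n ≤ b) :
    {t : R | t ≠ 0 ∧ h.IsRoot t}.ncard ≤ b - a := by
  classical
  obtain ⟨g, rfl⟩ : Polynomial.X ^ a ∣ h := Polynomial.X_pow_dvd_iff.mpr fun n hn => by
    by_contra hcoeff
    exact hn.not_ge (hsupp n (Polynomial.mem_support_iff.mpr hcoeff)).1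
  have hg : g ≠ 0 := right_ne_zero_of_mul hh
  have hdeg : g.natDegree ≤ b - a := by
    have := (hsupp _ (Polynomial.natDegree_mem_support_of_nonzero hh)).2
    rw [Polynomial.natDegree_X_pow_mul _ hg] at this
    omega
  calc {t : R | t ≠ 0 ∧ (Polynomial.X ^ a * g).IsRoot t}.ncard
      ≤ (g.roots.toFinset : Set R).ncard := Set.ncard_le_ncard fun t ⟨ht, hroot⟩ => by
        simpa [ht, hg] using hroot
    _ = g.roots.toFinset.card := Set.ncard_coe_finset _
    _ ≤ b - a := (Multiset.toFinset_card_le _).trans ((Polynomial.card_roots' g).trans hdeg)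

end Polynomial

section ChangeOfVariables

variable {R : Type*} [CommSemiring R] {m n : Type*} [Fintype n]

theorem aeval_bind₁_toMvPolynomial {S : Type*} [CommSemiring S] [Algebra R S] (M : Matrix m n R)
    (x : n → S) (f : MvPolynomial m R) :
    aeval x (bind₁ M.toMvPolynomial f) = aeval ((M.map (algebraMap R S)).mulVec x) f := by
  rw [aeval_bind₁]
  congr 2
  ext i
  rw [← Matrix.toMvPolynomial_eval_eq_apply, Matrix.toMvPolynomial_map, eval_map, aeval_def]

theorem eval_bind₁_toMvPolynomial (M : Matrix m n R) (x : n → R) (f : MvPolynomial m R) :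
    eval x (bind₁ M.toMvPolynomial f) = eval (M.mulVec x) f := by
  simpa [Algebra.algebraMap_self] using aeval_bind₁_toMvPolynomial M x f

theorem bind₁_toMvPolynomial_injective [DecidableEq n] {M : Matrix n n R} (hM : IsUnit M) :
    Function.Injective (bind₁ M.toMvPolynomial) := by
  obtain ⟨N, hMN, -⟩ := isUnit_iff_exists.mp hM
  refine Function.LeftInverse.injective (g := bind₁ N.toMvPolynomial) fun f => ?_
  rw [bind₁_bind₁]
  simp only [← Matrix.toMvPolynomial_mul, hMN, Matrix.toMvPolynomial_one, bind₁_X_left,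
    AlgHom.id_apply]

theorem isHomogeneous_bind₁_toMvPolynomial (M : Matrix m n R) {f : MvPolynomial m R} {d : ℕ}
    (hf : f.IsHomogeneous d) : (bind₁ M.toMvPolynomial f).IsHomogeneous d := by
  simpa using hf.aeval _ M.toMvPolynomial_isHomogeneous

end ChangeOfVariables

section MooreMatrix

variable {n : ℕ}

/-- The Moore matrix of `v`. For `N` the order of the base field, column `i` is the `i`-th Frobenius
conjugate of `v`. -/
def mooreMatrix {R : Type*} [Monoid R] (N : ℕ) (v : Fin n → R) : Matrix (Fin n) (Fin n) R :=
  Matrix.of fun j i => v j ^ N ^ (i : ℕ)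

theorem isUnit_mooreMatrix_iff {K : Type*} [Field K] {N : ℕ} {v : Fin n → K} :
    IsUnit (mooreMatrix N v) ↔ LinearIndependent K fun (i : Fin n) j => v j ^ N ^ (i : ℕ) :=
  Matrix.linearIndependent_cols_iff_isUnit.symm

end MooreMatrix

section GeometricWeights

theorem pow_pow_eq_mul_pow_geom_sum {M : Type*} [Monoid M] {N : ℕ} (hN : 1 ≤ N) (x : M) (i : ℕ) :
    x ^ N ^ i = x * (x ^ (N - 1)) ^ ∑ k ∈ Finset.range i, N ^ k := by
  have hgeom := geom_sum_mul_add (N - 1) i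
  rw [Nat.sub_add_cancel hN] at hgeom
  rw [← pow_mul, ← pow_succ', mul_comm, hgeom]

theorem weight_geom_sum (N : ℕ) (m : Fin 3 →₀ ℕ) :
    Finsupp.weight (fun i : Fin 3 => ∑ k ∈ Finset.range i, N ^ k) m = m 1 + (N + 1) * m 2 := by
  rw [Finsupp.weight_apply, Finsupp.sum_fintype _ _ (by simp), Fin.sum_univ_three]
  simp only [smul_eq_mul, Fin.coe_ofNat_eq_mod, Nat.reduceMod, Finset.sum_range_succ,
    Finset.range_zero, Finset.sum_empty]
  ring

end GeometricWeights

section Frobenius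

variable {F E : Type*} [Field F] [Fintype F] [Field E] [Algebra F E]

local notation "q" => Fintype.card F

variable (F) in
theorem frobeniusAlgHom_pow_apply (i : ℕ) (x : E) :
    (FiniteField.frobeniusAlgHom F E ^ i) x = x ^ q ^ i := by
  rw [AlgHom.coe_pow, FiniteField.coe_frobeniusAlgHom, pow_iterate]

variable (F) in
theorem mem_range_algebraMap_of_pow_card_eq {x : E} (hx : x ^ q = x) :
    x ∈ (algebraMap F E).range := by
  have hsplits : (Polynomial.X ^ q - Polynomial.X : Polynomial F).Splits := by
    rw [← Nat.card_eq_fintype_card]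
    exact Polynomial.splits_X_pow_nat_card_sub_X
  exact hsplits.mem_range_of_isRoot
    (FiniteField.X_pow_card_sub_X_ne_zero F Fintype.one_lt_card) (by simp [hx])

theorem pow_card_sub_one_rep_injective {V : Type*} [AddCommGroup V] [Module F V]
    {e : V →ₗ[F] E} (he : Function.Injective e) :
    Function.Injective fun P : Projectivization F V => e P.rep ^ (q - 1) := by
  intro P Q hPQ
  have hQ : e Q.rep ≠ 0 := (map_ne_zero_iff e he).mpr Q.rep_nonzero
  obtain ⟨a, ha⟩ := mem_range_algebraMap_of_pow_card_eq F (x := e P.rep / e Q.rep) <| by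
    rw [← mul_pow_sub_one Fintype.card_ne_zero, div_pow, show e P.rep ^ (q - 1) = _ from hPQ,
      div_self (pow_ne_zero _ hQ), mul_one]
  rw [← P.mk_rep, ← Q.mk_rep, Projectivization.mk_eq_mk_iff']
  exact ⟨a, he (by rw [map_smul, Algebra.smul_def, ha, div_mul_cancel₀ _ hQ])⟩

variable {n : ℕ}

theorem linearIndependent_of_isUnit_mooreMatrix {v : Fin n → E} (hv : IsUnit (mooreMatrix q v)) :
    LinearIndependent F v := by
  rw [Fintype.linearIndependent_iff]
  intro g hg
  have hker : Matrix.vecMul (algebraMap F E ∘ g) (mooreMatrix q v) = 0 := by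
    ext i
    have hconj := congrArg (FiniteField.frobeniusAlgHom F E ^ (i : ℕ)) hg
    rw [map_zero, map_sum] at hconj
    simp only [map_smul] at hconj
    simp only [frobeniusAlgHom_pow_apply, Algebra.smul_def] at hconj
    exact hconj
  have hg' : algebraMap F E ∘ g = 0 :=
    Matrix.vecMul_injective_iff_isUnit.mpr hv (hker.trans (Matrix.zero_vecMul _).symm)
  exact fun i => (map_eq_zero (algebraMap F E)).mp (congrFun hg' i)

theorem exists_basis_eq_of_isUnit_mooreMatrix [Finite E] (hn : Module.finrank F E = n)
    {v : Fin n → E} (hv : IsUnit (mooreMatrix q v)) : ∃ b : Module.Basis (Fin n) F E, ⇑b = v := by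
  have : Nonempty (Fin n) := ⟨⟨0, hn ▸ Module.finrank_pos⟩⟩
  exact ⟨basisOfLinearIndependentOfCardEqFinrank (linearIndependent_of_isUnit_mooreMatrix hv)
    (by rw [Fintype.card_fin, hn]), coe_basisOfLinearIndependentOfCardEqFinrank _ _⟩

variable (F) in
/-- The coordinates `Tr (v j * x)` of `x`, used to identify `E` with the space `Fin n → F` whose
projectivization carries the rational points. -/
def traceCoords (v : Fin n → E) : E →ₗ[F] Fin n → F :=
  LinearMap.pi fun j => Algebra.traceForm F E (v j)

theorem algebraMap_comp_traceCoords [Finite E] (hn : Module.finrank F E = n) (v : Fin n → E)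
    (x : E) :
    algebraMap F E ∘ traceCoords F v x =
      (mooreMatrix q v).mulVec fun i => x ^ q ^ (i : ℕ) := by
  ext j
  subst hn
  simp [traceCoords, FiniteField.algebraMap_trace_eq_sum_pow, Finset.sum_range, mul_pow,
    Matrix.mulVec, dotProduct, mooreMatrix]

theorem traceCoords_injective [Finite E] (hn : Module.finrank F E = n) {v : Fin n → E}
    (hv : IsUnit (mooreMatrix q v)) : Function.Injective (traceCoords F v) := by
  rw [injective_iff_map_eq_zero]
  intro x hx
  have hker : (mooreMatrix q v).mulVec (fun i => x ^ q ^ (i : ℕ)) = 0 := by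
    rw [← algebraMap_comp_traceCoords hn, hx]
    exact funext fun _ => map_zero _
  have hconj : (fun i : Fin n => x ^ q ^ (i : ℕ)) = 0 :=
    Matrix.mulVec_injective_iff_isUnit.mpr hv (hker.trans (Matrix.mulVec_zero _).symm)
  simpa using congrFun hconj ⟨0, hn ▸ Module.finrank_pos⟩

/-- The trace coordinates as an isomorphism, for `v` with linearly independent conjugates. -/
def traceCoordsEquiv [Finite E] (hn : Module.finrank F E = n) {v : Fin n → E}
    (hv : IsUnit (mooreMatrix q v)) : E ≃ₗ[F] Fin n → F :=
  (traceCoords F v).linearEquivOfInjective (traceCoords_injective hn hv) (by simp [hn])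

variable {d : ℕ} {f : MvPolynomial (Fin n) F}

/-- The form `f` in trace coordinates, as a form over `E` whose variable `i` stands for the
conjugate `x ^ q ^ i` of `x : E`. -/
def conjugateForm (v : Fin n → E) (f : MvPolynomial (Fin n) F) : MvPolynomial (Fin n) E :=
  bind₁ (mooreMatrix q v).toMvPolynomial (map (algebraMap F E) f)

theorem isHomogeneous_conjugateForm (v : Fin n → E) (hf : f.IsHomogeneous d) :
    (conjugateForm v f).IsHomogeneous d :=
  isHomogeneous_bind₁_toMvPolynomial _ (hf.map _)

theorem conjugateForm_ne_zero {v : Fin n → E} (hv : IsUnit (mooreMatrix q v)) (hf : f ≠ 0) :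
    conjugateForm v f ≠ 0 :=
  (map_ne_zero_iff _ (bind₁_toMvPolynomial_injective hv)).mpr <|
    (map_ne_zero_iff _ (map_injective _ (algebraMap F E).injective)).mpr hf

theorem eval_conjugateForm [Finite E] (hn : Module.finrank F E = n) (v : Fin n → E)
    (f : MvPolynomial (Fin n) F) (x : E) :
    eval (fun i : Fin n => x ^ q ^ (i : ℕ)) (conjugateForm v f) =
      algebraMap F E (eval (traceCoords F v x) f) := by
  rw [conjugateForm, eval_bind₁_toMvPolynomial, ← algebraMap_comp_traceCoords hn, eval_map,
    eval₂_comp]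

theorem coeff_single_conjugateForm {v : Fin n → E} (hf : f.IsHomogeneous d)
    (hfv : aeval v f = 0) (i : Fin n) : coeff (Finsupp.single i d) (conjugateForm v f) = 0 := by
  rw [coeff_single_of_isHomogeneous (isHomogeneous_conjugateForm v hf), conjugateForm,
    eval_bind₁_toMvPolynomial, Matrix.mulVec_single_one, eval_map, ← aeval_def]
  have hconj := congrArg (FiniteField.frobeniusAlgHom F E ^ (i : ℕ)) hfv
  rw [map_zero, comp_aeval_apply] at hconj
  simp only [frobeniusAlgHom_pow_apply] at hconj
  exact hconj

/-- The form `f` in trace coordinates, dehomogenized to a polynomial in `t = x ^ (q - 1)`: the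
conjugate `x ^ q ^ i` is `x * t ^ (1 + q + ⋯ + q ^ (i - 1))`. -/
def conjugatePolynomial (v : Fin n → E) (f : MvPolynomial (Fin n) F) : Polynomial E :=
  aeval (fun i : Fin n => Polynomial.X ^ ∑ k ∈ Finset.range i, q ^ k) (conjugateForm v f)

theorem pow_mul_eval_conjugatePolynomial [Finite E] (hn : Module.finrank F E = n)
    (v : Fin n → E) (hf : f.IsHomogeneous d) (x : E) :
    x ^ d * (conjugatePolynomial v f).eval (x ^ (q - 1)) =
      algebraMap F E (eval (traceCoords F v x) f) := by
  have hpoly : (conjugatePolynomial v f).eval (x ^ (q - 1)) =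
      eval (fun i : Fin n => (x ^ (q - 1)) ^ ∑ k ∈ Finset.range i, q ^ k) (conjugateForm v f) := by
    rw [← Polynomial.coe_aeval_eq_eval, conjugatePolynomial, comp_aeval_apply]
    simp [aeval_eq_eval]
  rw [hpoly, ← eval_smul_of_isHomogeneous (isHomogeneous_conjugateForm v hf),
    ← eval_conjugateForm hn]
  congr 2
  ext i
  simp [← pow_pow_eq_mul_pow_geom_sum (show 1 ≤ q from Fintype.card_pos)]

theorem conjugatePolynomial_ne_zero {v : Fin 3 → E} (hv : IsUnit (mooreMatrix q v))
    {f : MvPolynomial (Fin 3) F} (hf : f.IsHomogeneous d) (hd : d ≤ q + 1) (hf0 : f ≠ 0)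
    (hfv : aeval v f = 0) : conjugatePolynomial v f ≠ 0 := by
  -- `m 1 ≤ q`, so `m 1` and `m 2` are recovered from the exponent `m 1 + (q + 1) * m 2` of `t`.
  refine aeval_X_pow_ne_zero (fun m hm m' hm' hweight => ?_) (conjugateForm_ne_zero hv hf0)
  have hom := isHomogeneous_conjugateForm v hf
  have hlt {k : Fin 3 →₀ ℕ} (hk : k ∈ (conjugateForm v f).support) : k 1 < q + 1 :=
    (apply_lt_of_mem_support_of_coeff_single_eq_zero hom
      (coeff_single_conjugateForm hf hfv 1) hk).trans_le hd
  rw [weight_geom_sum, weight_geom_sum] at hweight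
  have h1 : m 1 = m' 1 := by
    simpa [Nat.mod_eq_of_lt (hlt hm), Nat.mod_eq_of_lt (hlt hm')] using
      congrArg (· % (q + 1)) hweight
  have h2 : m 2 = m' 2 := by simpa [h1] using hweight
  have hdeg : m.degree = m'.degree :=
    (hom.degree_eq_sum_deg_support hm).symm.trans (hom.degree_eq_sum_deg_support hm')
  simp only [Finsupp.degree_eq_sum, Fin.sum_univ_three] at hdeg
  ext i
  fin_cases i <;> grind

theorem mem_support_conjugatePolynomial_bounds {v : Fin 3 → E} {f : MvPolynomial (Fin 3) F}
    (hf : f.IsHomogeneous d) (hfv : aeval v f = 0) {k : ℕ}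
    (hk : k ∈ (conjugatePolynomial v f).support) : 1 ≤ k ∧ k ≤ (d - 1) * (q + 1) + 1 := by
  obtain ⟨m, hm, rfl⟩ := exists_weight_eq_of_mem_support_aeval_X_pow hk
  have hom := isHomogeneous_conjugateForm v hf
  have hlt (i : Fin 3) : m i < d := apply_lt_of_mem_support_of_coeff_single_eq_zero hom
    (coeff_single_conjugateForm hf hfv i) hm
  have hdeg : d = m.degree := hom.degree_eq_sum_deg_support hm
  rw [Finsupp.degree_eq_sum, Fin.sum_univ_three] at hdeg
  rw [weight_geom_sum]
  constructor
  · have := hlt 0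
    nlinarith
  · calc m 1 + (q + 1) * m 2 = (m 1 + m 2) + q * m 2 := by ring
      _ ≤ d + q * (d - 1) := by gcongr <;> grind
      _ = (d - 1) * (q + 1) + 1 := by
        obtain ⟨e, rfl⟩ := Nat.exists_eq_add_of_lt (Nat.zero_lt_of_lt (hlt 0))
        rw [zero_add, Nat.add_sub_cancel]
        ring

end Frobenius

section RationalZeros

variable {F σ : Type*} [Field F]

/-- The rational points of projective space at which `f` vanishes. The chosen representatives are
immaterial when `f` is homogeneous. -/
def rationalZeros (f : MvPolynomial σ F) : Set (Projectivization F (σ → F)) :=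
  {x | eval x.rep f = 0}

theorem mk_mem_rationalZeros {f : MvPolynomial σ F} {d : ℕ} (hf : f.IsHomogeneous d)
    {w : σ → F} (hw : w ≠ 0) : Projectivization.mk F w hw ∈ rationalZeros f ↔ eval w f = 0 := by
  obtain ⟨a, ha⟩ := Projectivization.exists_smul_eq_mk_rep F w hw
  rw [rationalZeros, Set.mem_ofPred_eq, ← ha, Units.smul_def, eval_smul_of_isHomogeneous hf]
  simp

theorem ncard_rationalZeros_bind₁ [Finite F] [Fintype σ] [DecidableEq σ] {A : Matrix σ σ F}
    (hA : IsUnit A) {f : MvPolynomial σ F} {d : ℕ} (hf : f.IsHomogeneous d) :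
    (rationalZeros (bind₁ A.toMvPolynomial f)).ncard = (rationalZeros f).ncard := by
  have hinj : Function.Injective A.mulVecLin := Matrix.mulVec_injective_iff_isUnit.mpr hA
  have hmap := Projectivization.map_injective A.mulVecLin hinj
  have hpre : rationalZeros (bind₁ A.toMvPolynomial f) =
      Projectivization.map A.mulVecLin hinj ⁻¹' rationalZeros f := by
    ext P
    conv_rhs => rw [← P.mk_rep]
    rw [Set.mem_preimage, Projectivization.map_mk, mk_mem_rationalZeros hf, Matrix.mulVecLin_apply,
      ← eval_bind₁_toMvPolynomial]
    rfl
  rw [hpre, Set.ncard_preimage_of_injective_subset_range hmap]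
  simp [(Finite.surjective_of_injective hmap).range_eq]

variable (F) in
theorem card_projectivePlane [Fintype F] :
    Nat.card (Projectivization F (Fin 3 → F)) = Fintype.card F ^ 2 + Fintype.card F + 1 := by
  rw [Projectivization.card_of_finrank F _ (Module.finrank_fin_fun F), Finset.sum_range_succ,
    Finset.sum_range_succ, Finset.sum_range_one, Nat.card_eq_fintype_card]
  ring

theorem ncard_eval_rep_ne_zero_add [Fintype F] (f : MvPolynomial (Fin 3) F) :
    {x : Projectivization F (Fin 3 → F) | eval x.rep f ≠ 0}.ncard + (rationalZeros f).ncard =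
      Fintype.card F ^ 2 + Fintype.card F + 1 := by
  rw [add_comm, ← card_projectivePlane, ← Set.ncard_add_ncard_compl (rationalZeros f)]
  rfl

theorem ncard_rationalZeros_le {E : Type*} [Fintype F] [Field E] [Finite E] [Algebra F E]
    (hE : Module.finrank F E = 3) {v : Fin 3 → E} (hv : IsUnit (mooreMatrix (Fintype.card F) v))
    {f : MvPolynomial (Fin 3) F} {d : ℕ} (hf : f.IsHomogeneous d) (hd : d ≤ Fintype.card F + 1)
    (hf0 : f ≠ 0) (hfv : aeval v f = 0) :
    (rationalZeros f).ncard ≤ (d - 1) * (Fintype.card F + 1) := by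
  let coords := traceCoordsEquiv hE hv
  calc (rationalZeros f).ncard
      ≤ {t : E | t ≠ 0 ∧ (conjugatePolynomial v f).IsRoot t}.ncard :=
        Set.ncard_le_ncard_of_injOn
          (fun P => coords.symm P.rep ^ (Fintype.card F - 1)) (fun P hP => ?_)
          (pow_card_sub_one_rep_injective (e := coords.symm.toLinearMap)
            coords.symm.injective).injOn (Set.toFinite _)
    _ ≤ (d - 1) * (Fintype.card F + 1) :=
        ncard_nonzero_roots_le (conjugatePolynomial_ne_zero hv hf hd hf0 hfv)
          fun k hk => mem_support_conjugatePolynomial_bounds hf hfv hk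
  have hx : coords.symm P.rep ≠ 0 := by simpa using P.rep_nonzero
  refine ⟨pow_ne_zero _ hx, (mul_eq_zero.mp ?_).resolve_left (pow_ne_zero d hx)⟩
  rw [pow_mul_eval_conjugatePolynomial hE v hf]
  have hcoords : traceCoords F v (coords.symm P.rep) = P.rep := coords.apply_symm_apply _
  rw [hcoords, show eval P.rep f = 0 from hP, map_zero]

end RationalZeros

section Dimension

variable {F E σ : Type*} [Field F] [Field E] [Algebra F E]

theorem exists_isHomogeneous_aeval_basis_eq (b : Module.Basis σ F E) {d : ℕ} (hd : d ≠ 0) (e : E) :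
    ∃ f : MvPolynomial σ F, f.IsHomogeneous d ∧ aeval b f = e := by
  obtain ⟨i₀⟩ := b.index_nonempty
  obtain ⟨d, rfl⟩ := Nat.exists_eq_succ_of_ne_zero hd
  let coords := b.repr (e / b i₀ ^ d)
  refine ⟨X i₀ ^ d * ∑ i ∈ coords.support, C (coords i) * X i, ?_, ?_⟩
  · exact (isHomogeneous_X_pow i₀ d).mul
      (IsHomogeneous.sum _ _ 1 fun i _ => isHomogeneous_C_mul_X _ i)
  · have hcoords : ∑ i ∈ coords.support, algebraMap F E (coords i) * b i = e / b i₀ ^ d := by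
      simpa only [Finsupp.linearCombination_apply, Finsupp.sum, Algebra.smul_def] using
        b.linearCombination_repr (e / b i₀ ^ d)
    simp [hcoords, mul_div_cancel₀, b.ne_zero]

variable [Fintype σ]

theorem finrank_homogeneousSubmodule (R : Type*) [CommRing R] [Nontrivial R] (d : ℕ) :
    Module.finrank R (homogeneousSubmodule σ R d) = (Fintype.card σ).multichoose d := by
  classical
  have hset : {m : σ →₀ ℕ | m.degree = d} =
      ((Finset.univ : Finset σ).finsuppAntidiag d : Set (σ →₀ ℕ)) := by
    ext m
    simp [Finset.mem_finsuppAntidiag, Finsupp.degree_eq_sum]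
  rw [homogeneousSubmodule_eq_finsupp_supported]
  refine (Module.finrank_eq_nat_card_basis (basisRestrictSupport R _)).trans ?_
  rw [hset, Nat.card_coe_set_eq, Set.ncard_coe_finset,
    Finset.card_finsuppAntidiag_nat_eq_multichoose, Finset.card_univ]

theorem finrank_homogeneousSubmodule_inf_ker_aeval_add (b : Module.Basis σ F E) {d : ℕ}
    (hd : d ≠ 0) :
    Module.finrank F ↥(homogeneousSubmodule σ F d ⊓ LinearMap.ker (aeval (R := F) b).toLinearMap) +
      Fintype.card σ = (Fintype.card σ).multichoose d := by
  set H := homogeneousSubmodule σ F d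
  have : Module.Finite F H := Module.Finite.iff_fg.mpr (homogeneousSubmodule_fg _ _ d)
  let evalAt : H →ₗ[F] E := (aeval (R := F) b).toLinearMap.domRestrict H
  have hsurj : LinearMap.range evalAt = ⊤ := LinearMap.range_eq_top.mpr fun e =>
    let ⟨f, hf, hfe⟩ := exists_isHomogeneous_aeval_basis_eq b hd e
    ⟨⟨f, hf⟩, hfe⟩
  have hker : Module.finrank F ↥(H ⊓ LinearMap.ker (aeval (R := F) b).toLinearMap) =
      Module.finrank F (LinearMap.ker evalAt) := by
    rw [LinearMap.ker_domRestrict, ← Submodule.map_comap_subtype]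
    exact Submodule.finrank_map_subtype_eq _ _
  have hrange : Module.finrank F (LinearMap.range evalAt) = Fintype.card σ := by
    rw [hsurj, finrank_top, Module.finrank_eq_card_basis b]
  rw [hker, add_comm, ← finrank_homogeneousSubmodule F d, ← hrange,
    LinearMap.finrank_range_add_finrank_ker]

end Dimension

section Example

variable {F : Type*} [Field F]

theorem exists_forall_sq_ne_add [Finite F] : ∃ c : F, ∀ s : F, s ^ 2 ≠ s + c := by
  by_contra! h
  have hsurj : Function.Surjective fun s : F => s ^ 2 - s := fun c =>
    (h c).imp fun s hs => sub_eq_of_eq_add' hs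
  have hinj := Finite.injective_iff_surjective.mpr hsurj
  exact zero_ne_one (hinj (by simp : (0 : F) ^ 2 - 0 = 1 ^ 2 - 1))

/-- The cubic formed by the line `z = y + c * x` and the conic `y ^ 2 = x * z`, in the coordinates
`(x, y, z) = (X 0, X 1, X 2)`. It vanishes at `(1, g, g ^ 2)` for every `g` in an extension. -/
def lineConic (c : F) : MvPolynomial (Fin 3) F :=
  (X 2 - X 1 - C c * X 0) * (X 1 ^ 2 - X 0 * X 2)

theorem isHomogeneous_lineConic (c : F) : (lineConic c).IsHomogeneous 3 :=
  (((isHomogeneous_X F _).sub (isHomogeneous_X F _)).sub (isHomogeneous_C_mul_X c _)).mul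
    ((isHomogeneous_X_pow 1 2).sub ((isHomogeneous_X F _).mul (isHomogeneous_X F _)))

theorem lineConic_ne_zero (c : F) : lineConic c ≠ 0 := by
  intro h
  simpa [lineConic] using congrArg (eval ![0, 1, 0]) h

/-- Representatives of the rational points of `lineConic c`: the left summand parametrizes the line,
the right one the conic, and `none` is the point with `x = 0`. -/
def lineConicPoint (c : F) : Option F ⊕ Option F → Fin 3 → F
  | .inl none => ![0, 1, 1]
  | .inl (some s) => ![1, s, s + c]
  | .inr none => ![0, 0, 1]
  | .inr (some s) => ![1, s, s ^ 2]

theorem lineConicPoint_ne_zero (c : F) (i : Option F ⊕ Option F) : lineConicPoint c i ≠ 0 := by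
  rcases i with (_ | s) | (_ | s) <;> simp [lineConicPoint]

theorem eval_lineConicPoint (c : F) (i : Option F ⊕ Option F) :
    eval (lineConicPoint c i) (lineConic c) = 0 := by
  rcases i with (_ | s) | (_ | s) <;> simp [lineConicPoint, lineConic]

theorem lineConicPoint_mk_injective {c : F} (hc : ∀ s : F, s ^ 2 ≠ s + c) :
    Function.Injective fun i => Projectivization.mk F _ (lineConicPoint_ne_zero c i) := by
  intro i j hij
  obtain ⟨a, ha⟩ := (Projectivization.mk_eq_mk_iff' F _ _ _ _).mp hij
  have h0 := congrFun ha 0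
  have h1 := congrFun ha 1
  have h2 := congrFun ha 2
  rcases i with (_ | s) | (_ | s) <;> rcases j with (_ | t) | (_ | t) <;>
    simp only [lineConicPoint, Pi.smul_apply, smul_eq_mul, Matrix.cons_val] at h0 h1 h2 <;> grind

theorem two_mul_card_add_one_le_ncard_rationalZeros_lineConic [Fintype F] {c : F}
    (hc : ∀ s : F, s ^ 2 ≠ s + c) :
    2 * (Fintype.card F + 1) ≤ (rationalZeros (lineConic c)).ncard := by
  calc 2 * (Fintype.card F + 1) = Nat.card (Option F ⊕ Option F) := by
        rw [Nat.card_sum, Finite.card_option, Nat.card_eq_fintype_card, two_mul]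
    _ = (Set.range fun i => Projectivization.mk F _ (lineConicPoint_ne_zero c i)).ncard :=
        (Set.ncard_range_of_injective (lineConicPoint_mk_injective hc)).symm
    _ ≤ (rationalZeros (lineConic c)).ncard := Set.ncard_le_ncard <| Set.range_subset_iff.mpr
        fun i => (mk_mem_rationalZeros (isHomogeneous_lineConic c) _).mpr (eval_lineConicPoint c i)

theorem map_toMatrix_transpose_mulVec {E ι : Type*} [Field E] [Algebra F E] [Fintype ι]
    (b : Module.Basis ι F E) (w : ι → E) :
    ((b.toMatrix w).transpose.map (algebraMap F E)).mulVec b = w := by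
  ext i
  simpa [Matrix.mulVec, dotProduct, Algebra.smul_def] using b.sum_toMatrix_smul_self w i

theorem exists_cubic_two_mul_card_add_one_le_ncard_rationalZeros {E : Type*} [Fintype F] [Field E]
    [Finite E] [Algebra F E] (b : Module.Basis (Fin 3) F E) :
    ∃ f : MvPolynomial (Fin 3) F, f.IsHomogeneous 3 ∧ f ≠ 0 ∧ aeval b f = 0 ∧
      2 * (Fintype.card F + 1) ≤ (rationalZeros f).ncard := by
  obtain ⟨c, hc⟩ := exists_forall_sq_ne_add (F := F)
  let pb := Field.powerBasisOfFiniteOfSeparable F E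
  have hdim : pb.dim = 3 := by rw [← pb.finrank, Module.finrank_eq_card_basis b, Fintype.card_fin]
  let powers := pb.basis.reindex (finCongr hdim)
  have hpowers : ⇑powers = fun i : Fin 3 => pb.gen ^ (i : ℕ) := by
    ext i
    simp [powers]
  let A := (b.toMatrix powers).transpose
  have hA : IsUnit A := by
    have := b.invertibleToMatrix powers
    exact isUnit_of_invertible A
  refine ⟨bind₁ A.toMvPolynomial (lineConic c),
    isHomogeneous_bind₁_toMvPolynomial A (isHomogeneous_lineConic c),
    (map_ne_zero_iff _ (bind₁_toMvPolynomial_injective hA)).mpr (lineConic_ne_zero c), ?_, ?_⟩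
  · rw [aeval_bind₁_toMvPolynomial, map_toMatrix_transpose_mulVec, hpowers]
    simp [lineConic]
  · rw [ncard_rationalZeros_bind₁ hA (isHomogeneous_lineConic c)]
    exact two_mul_card_add_one_le_ncard_rationalZeros_lineConic hc

end Example

/-- Parameters of the code `C_L(Z, L_3)`: evaluating the cubics through a degree-3 closed
point (not on any rational line) at the `q² + q + 1` points of `P²(F_q)` yields a code of
length `q² + q + 1`, dimension `7` (the space of such cubics has dimension `7` and the
evaluation map is injective), and minimum distance exactly `q² - q - 1`. -/
theorem stmt_12 (q : ℕ) (hq : IsPrimePow q)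
    (F E : Type) [Field F] [Fintype F] [Field E] [Fintype E] [Algebra F E]
    (hF : Fintype.card F = q) (hE : Fintype.card E = q ^ 3)
    -- `v` represents a degree-3 closed point of `P²`: its three Frobenius conjugates are
    -- pairwise distinct and non-collinear (equivalently, linearly independent).
    (v : Fin 3 → E)
    (hv : LinearIndependent E ![v, fun i => v i ^ q, fun i => v i ^ q ^ 2]) :
    Nat.card (Projectivization F (Fin 3 → F)) = q ^ 2 + q + 1 ∧
    Module.finrank F
      ↥(homogeneousSubmodule (Fin 3) F 3 ⊓
          LinearMap.ker (MvPolynomial.aeval (R := F) v).toLinearMap) = 7 ∧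
    (∀ f ∈ homogeneousSubmodule (Fin 3) F 3 ⊓
        LinearMap.ker (MvPolynomial.aeval (R := F) v).toLinearMap,
      (∀ x : Projectivization F (Fin 3 → F), MvPolynomial.eval x.rep f = 0) → f = 0) ∧
    (∀ f ∈ homogeneousSubmodule (Fin 3) F 3 ⊓
        LinearMap.ker (MvPolynomial.aeval (R := F) v).toLinearMap, f ≠ 0 →
      q ^ 2 - q - 1 ≤
        {x : Projectivization F (Fin 3 → F) | MvPolynomial.eval x.rep f ≠ 0}.ncard) ∧
    (∃ f ∈ homogeneousSubmodule (Fin 3) F 3 ⊓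
        LinearMap.ker (MvPolynomial.aeval (R := F) v).toLinearMap, f ≠ 0 ∧
      {x : Projectivization F (Fin 3 → F) | MvPolynomial.eval x.rep f ≠ 0}.ncard
        = q ^ 2 - q - 1) := by
  subst hF
  have hE3 : Module.finrank F E = 3 := Nat.pow_right_injective Fintype.one_lt_card <|
    (Module.card_eq_pow_finrank (K := F) (V := E)).symm.trans hE
  have hM : IsUnit (mooreMatrix (Fintype.card F) v) := isUnit_mooreMatrix_iff.mpr <| by
    convert hv using 2 with i
    fin_cases i <;> simp
  obtain ⟨b, rfl⟩ := exists_basis_eq_of_isUnit_mooreMatrix hE3 hM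
  have zeros_le {f : MvPolynomial (Fin 3) F} (hf : f.IsHomogeneous 3) (hfb : aeval b f = 0)
      (hf0 : f ≠ 0) : (rationalZeros f).ncard ≤ 2 * (Fintype.card F + 1) :=
    ncard_rationalZeros_le hE3 hM hf (Nat.succ_le_succ hq.two_le) hf0 hfb
  have hdim := finrank_homogeneousSubmodule_inf_ker_aeval_add b three_ne_zero
  rw [Fintype.card_fin, show Nat.multichoose 3 3 = 7 + 3 from Nat.multichoose_eq 3 3] at hdim
  refine ⟨card_projectivePlane F, Nat.add_right_cancel hdim, fun f ⟨hf, hfb⟩ hzero => ?_,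
    fun f ⟨hf, hfb⟩ hf0 => ?_, ?_⟩
  · by_contra hf0
    have hweight := ncard_eval_rep_ne_zero_add f
    simp only [hzero, ne_eq, not_true_eq_false, Set.ofPred_false, Set.ncard_empty] at hweight
    nlinarith [zeros_le hf hfb hf0, hq.two_le]
  · have hweight := ncard_eval_rep_ne_zero_add f
    have hle := zeros_le hf hfb hf0
    omega
  · obtain ⟨f, hf, hf0, hfb, hge⟩ := exists_cubic_two_mul_card_add_one_le_ncard_rationalZeros b
    have hweight := ncard_eval_rep_ne_zero_add f
    have hle := zeros_le hf hfb hf0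
    exact ⟨f, ⟨hf, hfb⟩, hf0, by omega⟩
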